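/- There exists a deterministic online algorithm for online unit-length busy time scheduling on heterogeneous machines that is 8-competitive: for every collection of machine types (with costs c_k ≥ 1 strictly increasing in k and capacities B_k ∈ ℤ≥1 strictly increasing in k) there is a deterministic online algorithm A such that for every instance J, A(J) is a valid schedule for J and cost(A(J)) ≤ 8·OPT(J). -/

import Mathlib

/-- An instance of unit-length busy time scheduling: a finite set of jobs,
each job `j` having an integer release time `r j` and deadline `d j` with `r j ≤ d j`. -/
structure SchedInstance where
  jobs : Finset ℕ
  r : ℕ → ℤ
  d : ℕ → ℤ
  window : ∀ j ∈ jobs, r j ≤ d j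

/-- A batch: a machine type, an execution time, and a set of jobs. -/
structure Batch where
  btype : ℕ
  time : ℤ
  bjobs : Finset ℕ
deriving DecidableEq

/-- A valid schedule: a finite family of batches, each of size at most the capacity of
its machine type, executing each of its jobs within its release/deadline window,
whose job sets partition the job set of the instance. -/
def ValidSchedule (B : ℕ → ℕ) (P : SchedInstance) (S : Finset Batch) : Prop :=
  (∀ X ∈ S, X.bjobs.card ≤ B X.btype) ∧
  (∀ X ∈ S, ∀ j ∈ X.bjobs, j ∈ P.jobs ∧ P.r j ≤ X.time ∧ X.time ≤ P.d j) ∧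
  (∀ X ∈ S, ∀ Y ∈ S, X ≠ Y → Disjoint X.bjobs Y.bjobs) ∧
  (∀ j ∈ P.jobs, ∃ X ∈ S, j ∈ X.bjobs)

/-- The cost of a schedule: the sum over its batches of the cost of the batch's type. -/
noncomputable def schedCost (c : ℕ → ℝ) (S : Finset Batch) : ℝ :=
  ∑ X ∈ S, c X.btype

/-- The optimal (minimum) cost of a valid schedule for an instance. -/
noncomputable def OPT (c : ℕ → ℝ) (B : ℕ → ℕ) (P : SchedInstance) : ℝ :=
  sInf {x : ℝ | ∃ S : Finset Batch, ValidSchedule B P S ∧ schedCost c S = x}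

/-- Causality of a deterministic online algorithm: whenever two instances have identical
sets of jobs (with identical release times and deadlines) released at or before a time τ,
the batches executed at times ≤ τ coincide. -/
def Causal (A : SchedInstance → Finset Batch) : Prop :=
  ∀ P P' : SchedInstance, ∀ τ : ℤ,
    P.jobs.filter (fun j => P.r j ≤ τ) = P'.jobs.filter (fun j => P'.r j ≤ τ) →
    (∀ j ∈ P.jobs.filter (fun j => P.r j ≤ τ), P.r j = P'.r j ∧ P.d j = P'.d j) →
    (A P).filter (fun X => X.time ≤ τ) = (A P').filter (fun X => X.time ≤ τ)

/-- A job together with its data. -/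
structure Job where
  name : ℕ
  release : ℤ
  deadline : ℤ
deriving DecidableEq

/-- A block of jobs executed at one time, at a cost of at most `2 ^ level` units. -/
structure Block where
  level : ℕ
  time : ℤ
  jobs : Finset Job
deriving DecidableEq

instance : Nonempty Block := ⟨⟨0, 0, ∅⟩⟩

/-- The jobs of `D` that are in no block of the history `h`. -/
def unserved (D : Finset Job) (h : List Block) : Finset Job :=
  D.filter fun i => ∀ X ∈ h, i ∉ X.jobs

theorem mem_unserved {D : Finset Job} {h : List Block} {i : Job} :
    i ∈ unserved D h ↔ i ∈ D ∧ ∀ X ∈ h, i ∉ X.jobs := by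
  simp [unserved]

theorem mem_unserved_cons {D : Finset Job} {h : List Block} {Z : Block} {i : Job} :
    i ∈ unserved D (Z :: h) ↔ i ∈ unserved D h ∧ i ∉ Z.jobs := by
  simp only [mem_unserved, List.mem_cons, forall_eq_or_imp]
  tauto

/-- `NextBlock F D h Y`: after the history `h` (most recent block first), the block `Y` may be
executed next. Here `F k n` says that `n` jobs fit into a block of level `k`. The block is executed
at the earliest deadline of an unserved job, it takes the released unserved jobs of earliest
deadline, and its level `k` is justified: the previous blocks of level `k` are executed no later
than a time `θ`, after which either a job of `Y` due now is released (if `k = 0`), or all jobs of a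
full block of level `k - 1`, all of them due by now, are released. -/
structure NextBlock (F : ℕ → ℕ → Prop) (D : Finset Job) (h : List Block) (Y : Block) : Prop where
  sub : Y.jobs ⊆ unserved D h
  released : ∀ i ∈ Y.jobs, i.release ≤ Y.time
  urgent : ∀ i ∈ unserved D h, Y.time ≤ i.deadline
  trigger : ∃ j ∈ Y.jobs, j.deadline = Y.time
  fits : F Y.level Y.jobs.card
  edf : ∀ i ∈ unserved D h, i.release ≤ Y.time → i ∉ Y.jobs →
    ¬ F Y.level (Y.jobs.card + 1) ∧ ∀ i' ∈ Y.jobs, i'.deadline ≤ i.deadline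
  justified : ∃ θ : ℤ, (∀ X ∈ h, X.level = Y.level → X.time ≤ θ) ∧
    ((Y.level = 0 ∧ ∃ j ∈ Y.jobs, θ < j.release ∧ j.deadline = Y.time) ∨
      ∃ V ∈ h, V.level + 1 = Y.level ∧ ¬ F V.level (V.jobs.card + 1) ∧
        ∀ i ∈ V.jobs, θ < i.release ∧ i.deadline ≤ Y.time)

/-- The histories that arise by executing admissible blocks one after the other. -/
inductive Reach (F : ℕ → ℕ → Prop) (D : Finset Job) : List Block → Prop
  | nil : Reach F D []
  | cons {h : List Block} {Y : Block} : Reach F D h → NextBlock F D h Y → Reach F D (Y :: h)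

section Existence

variable {F : ℕ → ℕ → Prop} {D : Finset Job} {h : List Block}

theorem Reach.time_le_deadline (hr : Reach F D h) :
    ∀ X ∈ h, ∀ i ∈ unserved D h, X.time ≤ i.deadline := by
  induction hr with
  | nil => simp
  | cons _ hY ih =>
    intro X hX i hi
    rw [mem_unserved_cons] at hi
    rcases List.mem_cons.1 hX with rfl | hX
    · exact hY.urgent i hi.1
    · exact ih X hX i hi.1

theorem Reach.jobs_subset (hr : Reach F D h) : ∀ X ∈ h, X.jobs ⊆ D := by
  induction hr with
  | nil => simp
  | cons _ hY ih =>
    intro X hX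
    rcases List.mem_cons.1 hX with rfl | hX
    · exact fun i hi => (mem_unserved.1 (hY.sub hi)).1
    · exact ih X hX

theorem Reach.exists_nextBlock_of_mem (hr : Reach F D h) :
    ∀ X ∈ h, ∃ h', NextBlock F D h' X := by
  induction hr with
  | nil => simp
  | cons _ hY ih =>
    intro X hX
    rcases List.mem_cons.1 hX with rfl | hX
    · exact ⟨_, hY⟩
    · exact ih X hX

theorem Reach.eq_of_mem_jobs (hr : Reach F D h) :
    ∀ X ∈ h, ∀ Y ∈ h, ∀ i, i ∈ X.jobs → i ∈ Y.jobs → X = Y := by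
  induction hr with
  | nil => simp
  | cons _ hZ ih =>
    intro X hX Y hY i hiX hiY
    rcases List.mem_cons.1 hX with rfl | hXh <;> rcases List.mem_cons.1 hY with rfl | hYh
    · rfl
    · exact absurd hiY ((mem_unserved.1 (hZ.sub hiX)).2 Y hYh)
    · exact absurd hiX ((mem_unserved.1 (hZ.sub hiY)).2 X hXh)
    · exact ih X hXh Y hYh i hiX hiY

theorem Reach.time_le_time {Y : Block} (hr : Reach F D h) (hY : NextBlock F D h Y) :
    ∀ X ∈ h, X.time ≤ Y.time := by
  intro X hX
  obtain ⟨j, hj, hjt⟩ := hY.trigger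
  exact hjt ▸ hr.time_le_deadline X hX j (hY.sub hj)

/-- The history splits into a recent part consisting of full blocks all of whose jobs are due by
`t`, and an older part, executed before the release of all other jobs that are due by `t`. -/
theorem Reach.exists_split (hr : Reach F D h) (t : ℤ) :
    ∃ (θ : ℤ) (R O : List Block), h = R ++ O ∧
      (∀ V ∈ R, ¬ F V.level (V.jobs.card + 1) ∧
        ∀ i ∈ V.jobs, θ < i.release ∧ i.deadline ≤ t) ∧
      (∀ X ∈ O, X.time ≤ θ) ∧ ∀ i ∈ unserved D h, i.deadline ≤ t → θ < i.release := by
  induction hr with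
  | nil =>
    obtain ⟨m, hm⟩ := (D.image Job.release).bddBelow
    refine ⟨m - 1, [], [], rfl, by simp, by simp, fun i hi _ => ?_⟩
    have : m ≤ i.release := hm (by simpa using ⟨i, (mem_unserved.1 hi).1, rfl⟩)
    omega
  | @cons h Z hr hZ ih =>
    by_cases hg : ¬ F Z.level (Z.jobs.card + 1) ∧ ∀ i ∈ Z.jobs, i.deadline ≤ t
    · obtain ⟨θ, R, O, rfl, hR, hO, hU⟩ := ih
      refine ⟨θ, Z :: R, O, rfl, ?_, hO, fun i hi => hU i (mem_unserved_cons.1 hi).1⟩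
      intro V hV
      rcases List.mem_cons.1 hV with rfl | hV
      · exact ⟨hg.1, fun i hi => ⟨hU i (hZ.sub hi) (hg.2 i hi), hg.2 i hi⟩⟩
      · exact hR V hV
    · refine ⟨Z.time, [], Z :: h, rfl, by simp, ?_, ?_⟩
      · intro X hX
        rcases List.mem_cons.1 hX with rfl | hX
        · exact le_rfl
        · exact hr.time_le_time hZ X hX
      · intro i hi hit
        rw [mem_unserved_cons] at hi
        by_contra hlt
        obtain ⟨hfull, hd⟩ := hZ.edf i hi.1 (not_lt.1 hlt) hi.2
        exact hg ⟨hfull, fun i' hi' => (hd i' hi').trans hit⟩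

theorem exists_earliest_deadline_subset (W : Finset Job) (n : ℕ) (hn : n ≤ W.card) :
    ∃ Q ⊆ W, Q.card = n ∧ ∀ i ∈ W, i ∉ Q → ∀ i' ∈ Q, i'.deadline ≤ i.deadline := by
  induction n with
  | zero => exact ⟨∅, by simp⟩
  | succ n ih =>
    obtain ⟨Q, hQ, rfl, hd⟩ := ih (by omega)
    have hne : (W \ Q).Nonempty := by
      rw [← Finset.card_pos, Finset.card_sdiff_of_subset hQ]
      omega
    obtain ⟨m, hm, hmin⟩ := Finset.exists_min_image (W \ Q) Job.deadline hne
    rw [Finset.mem_sdiff] at hm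
    refine ⟨insert m Q, Finset.insert_subset hm.1 hQ, Finset.card_insert_of_notMem hm.2, ?_⟩
    intro i hi hiQ i' hi'
    rw [Finset.mem_insert, not_or] at hiQ
    rcases Finset.mem_insert.1 hi' with rfl | hi'
    · exact hmin i (Finset.mem_sdiff.2 ⟨hi, hiQ.2⟩)
    · exact hd i hi hiQ.2 i' hi'

/-- A largest subset of earliest deadline among those that fit. -/
theorem exists_maximal_fitting_subset {G : ℕ → Prop} (hG : G 1) (W : Finset Job)
    (hW : W.Nonempty) :
    ∃ Q ⊆ W, Q.Nonempty ∧ G Q.card ∧ ∀ i ∈ W, i ∉ Q →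
      ¬ G (Q.card + 1) ∧ ∀ i' ∈ Q, i'.deadline ≤ i.deadline := by
  classical
  have h1 : 1 ≤ W.card := hW.card_pos
  obtain ⟨Q, hQ, hcard, hd⟩ := exists_earliest_deadline_subset W (Nat.findGreatest G W.card)
    (Nat.findGreatest_le _)
  refine ⟨Q, hQ, ?_, hcard ▸ Nat.findGreatest_spec h1 hG, fun i hi hiQ => ⟨?_, hd i hi hiQ⟩⟩
  · rw [← Finset.card_pos, hcard]
    exact Nat.le_findGreatest h1 hG
  · refine Nat.findGreatest_is_greatest (n := W.card) (by omega) ?_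
    exact Finset.card_lt_card ⟨hQ, fun hWQ => hiQ (hWQ hi)⟩

theorem Reach.exists_nextBlock (hF1 : ∀ k, F k 1) (hD : ∀ i ∈ D, i.release ≤ i.deadline)
    (hr : Reach F D h) (hU : (unserved D h).Nonempty) : ∃ Y, NextBlock F D h Y := by
  classical
  obtain ⟨j, hj, hmin⟩ := Finset.exists_min_image _ Job.deadline hU
  obtain ⟨θ, R, O, hh, hR, hO, hθ⟩ := hr.exists_split j.deadline
  have hex : ∃ k, k ∉ R.map Block.level := by
    obtain ⟨k, hk⟩ := Infinite.exists_notMem_finset (R.map Block.level).toFinset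
    exact ⟨k, by simpa using hk⟩
  have hk := Nat.find_spec hex
  have hklt := fun m => Nat.find_min hex (m := m)
  generalize Nat.find hex = k at hk hklt
  obtain ⟨Q, hQ, ⟨q, hq⟩, hfit, hmax⟩ := exists_maximal_fitting_subset (hF1 k)
    ((unserved D h).filter fun i => i.release ≤ j.deadline)
    ⟨j, Finset.mem_filter.2 ⟨hj, hD j (mem_unserved.1 hj).1⟩⟩
  have hQU : Q ⊆ unserved D h := hQ.trans (Finset.filter_subset _ _)
  have htrig : ∃ i ∈ Q, i.deadline = j.deadline := by
    by_cases hjQ : j ∈ Q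
    · exact ⟨j, hjQ, rfl⟩
    · refine ⟨q, hq, le_antisymm ?_ (hmin q (hQU hq))⟩
      exact (hmax j (Finset.mem_filter.2 ⟨hj, hD j (mem_unserved.1 hj).1⟩) hjQ).2 q hq
  refine ⟨⟨k, j.deadline, Q⟩, hQU, fun i hi => (Finset.mem_filter.1 (hQ hi)).2, hmin, htrig, hfit,
    fun i hi hir => hmax i (Finset.mem_filter.2 ⟨hi, hir⟩), θ, ?_, ?_⟩
  · intro X hX hXk
    rw [hh, List.mem_append] at hX
    rcases hX with hX | hX
    · exact absurd (List.mem_map.2 ⟨X, hX, hXk⟩) hk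
    · exact hO X hX
  · rcases Nat.eq_zero_or_pos k with rfl | hpos
    · obtain ⟨i, hi, hid⟩ := htrig
      exact Or.inl ⟨rfl, i, hi, hθ i (hQU hi) hid.le, hid⟩
    · have := hklt (k - 1) (by omega)
      rw [not_not, List.mem_map] at this
      obtain ⟨V, hV, hVk⟩ := this
      exact Or.inr ⟨V, hh ▸ List.mem_append_left _ hV, by simp only; omega, hR V hV⟩

end Existence

section Run

variable (F : ℕ → ℕ → Prop) (D : Finset Job)

open Classical in
/-- Execute one more block, if there is an admissible one. -/
noncomputable def step (h : List Block) : List Block :=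
  if ∃ Y, NextBlock F D h Y then Classical.epsilon (NextBlock F D h) :: h else h

/-- The history after `n` steps. -/
noncomputable def run (n : ℕ) : List Block :=
  (step F D)^[n] []

theorem run_succ (n : ℕ) : run F D (n + 1) = step F D (run F D n) :=
  Function.iterate_succ_apply' _ _ _

theorem step_cases (h : List Block) :
    (∃ Y, NextBlock F D h Y ∧ step F D h = Y :: h) ∨
      (¬ ∃ Y, NextBlock F D h Y) ∧ step F D h = h := by
  by_cases hex : ∃ Y, NextBlock F D h Y
  · exact Or.inl ⟨_, Classical.epsilon_spec hex, if_pos hex⟩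
  · exact Or.inr ⟨hex, if_neg hex⟩

theorem reach_run (n : ℕ) : Reach F D (run F D n) := by
  induction n with
  | zero => exact Reach.nil
  | succ n ih =>
    rw [run_succ]
    rcases step_cases F D (run F D n) with ⟨Y, hY, he⟩ | ⟨_, he⟩
    · exact he ▸ Reach.cons ih hY
    · rwa [he]

variable {F D}

theorem card_unserved_run_le (hF1 : ∀ k, F k 1) (hD : ∀ i ∈ D, i.release ≤ i.deadline) (n : ℕ) :
    (unserved D (run F D n)).card ≤ D.card - n := by
  induction n with
  | zero => exact Finset.card_filter_le _ _
  | succ n ih =>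
    rw [run_succ]
    rcases step_cases F D (run F D n) with ⟨Y, hY, he⟩ | ⟨hno, he⟩
    · rw [he]
      obtain ⟨j, hj, -⟩ := hY.trigger
      have : (unserved D (Y :: run F D n)).card < (unserved D (run F D n)).card := by
        refine Finset.card_lt_card ⟨fun i hi => (mem_unserved_cons.1 hi).1, fun hsub => ?_⟩
        exact (mem_unserved_cons.1 (hsub (hY.sub hj))).2 hj
      omega
    · rw [he]
      have : unserved D (run F D n) = ∅ := by
        by_contra hne
        exact hno ((reach_run F D n).exists_nextBlock hF1 hD (Finset.nonempty_iff_ne_empty.2 hne))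
      simp [this]

theorem unserved_run_eq_empty (hF1 : ∀ k, F k 1) (hD : ∀ i ∈ D, i.release ≤ i.deadline) {n : ℕ}
    (hn : D.card ≤ n) : unserved D (run F D n) = ∅ := by
  have := card_unserved_run_le hF1 hD n
  rw [← Finset.card_eq_zero]
  omega

theorem run_eq_of_card_le (hF1 : ∀ k, F k 1) (hD : ∀ i ∈ D, i.release ≤ i.deadline) {n : ℕ}
    (hn : D.card ≤ n) : run F D n = run F D D.card := by
  induction n, hn using Nat.le_induction with
  | base => rfl
  | succ n hn ih =>
    rw [run_succ]
    rcases step_cases F D (run F D n) with ⟨Y, hY, _⟩ | ⟨_, he⟩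
    · obtain ⟨j, hj, -⟩ := hY.trigger
      have := hY.sub hj
      simp [unserved_run_eq_empty hF1 hD hn] at this
    · exact he.trans ih

variable {D' : Finset Job} {h : List Block} {τ : ℤ}

theorem NextBlock.congr_of_agree (hD' : ∀ i ∈ D', i.release ≤ i.deadline)
    (hag : ∀ i : Job, i.release ≤ τ → (i ∈ D ↔ i ∈ D')) {Y : Block} (hY : NextBlock F D h Y)
    (hτ : Y.time ≤ τ) : NextBlock F D' h Y := by
  have hU : ∀ i : Job, i.release ≤ τ → (i ∈ unserved D h ↔ i ∈ unserved D' h) := fun i hi => by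
    rw [mem_unserved, mem_unserved, hag i hi]
  refine ⟨fun i hi => (hU i ((hY.released i hi).trans hτ)).1 (hY.sub hi), hY.released, ?_,
    hY.trigger, hY.fits, fun i hi hir => hY.edf i ((hU i (hir.trans hτ)).2 hi) hir, hY.justified⟩
  intro i hi
  by_contra hlt
  have := hD' i (mem_unserved.1 hi).1
  exact hlt (hY.urgent i ((hU i (by omega)).2 hi))

theorem NextBlock.time_eq {Y Z : Block} (hY : NextBlock F D h Y) (hZ : NextBlock F D h Z) :
    Y.time = Z.time := by
  obtain ⟨j, hj, hjt⟩ := hY.trigger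
  obtain ⟨i, hi, hit⟩ := hZ.trigger
  exact le_antisymm (hit ▸ hY.urgent i (hZ.sub hi)) (hjt ▸ hZ.urgent j (hY.sub hj))

theorem step_eq_of_agree (hD : ∀ i ∈ D, i.release ≤ i.deadline)
    (hD' : ∀ i ∈ D', i.release ≤ i.deadline)
    (hag : ∀ i : Job, i.release ≤ τ → (i ∈ D ↔ i ∈ D')) {Y : Block} (hY : NextBlock F D h Y)
    (hτ : Y.time ≤ τ) : step F D h = step F D' h := by
  have hY' := hY.congr_of_agree hD' hag hτ
  have : NextBlock F D h = NextBlock F D' h := by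
    ext Z
    exact ⟨fun hZ => hZ.congr_of_agree hD' hag (hY.time_eq hZ ▸ hτ),
      fun hZ => hZ.congr_of_agree hD (fun i hi => (hag i hi).symm) (hY'.time_eq hZ ▸ hτ)⟩
  unfold step
  rw [this]

/-- Once all admissible blocks are later than `τ`, the part of the history up to `τ` is fixed. -/
theorem step_of_late (hlate : ∀ Y, NextBlock F D h Y → τ < Y.time) :
    (∀ Y, NextBlock F D (step F D h) Y → τ < Y.time) ∧
      (step F D h).filter (fun X => X.time ≤ τ) = h.filter (fun X => X.time ≤ τ) := by
  rcases step_cases F D h with ⟨Z, hZ, he⟩ | ⟨_, he⟩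
  · rw [he]
    refine ⟨fun Y hY => ?_, ?_⟩
    · obtain ⟨j, hj, hjt⟩ := hY.trigger
      exact (hlate Z hZ).trans_le
        (hjt ▸ hZ.urgent j (mem_unserved_cons.1 (hY.sub hj)).1)
    · have := hlate Z hZ
      rw [List.filter_cons_of_neg (by simpa using this)]
  · rw [he]
    exact ⟨hlate, rfl⟩

theorem filter_run_eq_of_agree (hD : ∀ i ∈ D, i.release ≤ i.deadline)
    (hD' : ∀ i ∈ D', i.release ≤ i.deadline)
    (hag : ∀ i : Job, i.release ≤ τ → (i ∈ D ↔ i ∈ D')) (n : ℕ) :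
    (run F D n).filter (fun X => X.time ≤ τ) = (run F D' n).filter (fun X => X.time ≤ τ) := by
  suffices run F D n = run F D' n ∨
      (∀ Y, NextBlock F D (run F D n) Y → τ < Y.time) ∧
      (∀ Y, NextBlock F D' (run F D' n) Y → τ < Y.time) ∧
      (run F D n).filter (fun X => X.time ≤ τ) = (run F D' n).filter (fun X => X.time ≤ τ) by
    rcases this with h | h
    · rw [h]
    · exact h.2.2
  induction n with
  | zero => exact Or.inl rfl
  | succ n ih =>
    have key : (∀ Y, NextBlock F D (run F D n) Y → τ < Y.time) →
        (∀ Y, NextBlock F D' (run F D' n) Y → τ < Y.time) →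
        (run F D n).filter (fun X => X.time ≤ τ) = (run F D' n).filter (fun X => X.time ≤ τ) →
        (∀ Y, NextBlock F D (run F D (n + 1)) Y → τ < Y.time) ∧
        (∀ Y, NextBlock F D' (run F D' (n + 1)) Y → τ < Y.time) ∧
        (run F D (n + 1)).filter (fun X => X.time ≤ τ) =
          (run F D' (n + 1)).filter (fun X => X.time ≤ τ) := by
      intro h1 h2 h3
      rw [run_succ, run_succ]
      exact ⟨(step_of_late h1).1, (step_of_late h2).1,
        (step_of_late h1).2.trans (h3.trans (step_of_late h2).2.symm)⟩
    rcases ih with ih | ⟨h1, h2, h3⟩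
    · by_cases h1 : ∃ Y, NextBlock F D (run F D n) Y ∧ Y.time ≤ τ
      · obtain ⟨Y, hY, hτ⟩ := h1
        left
        rw [run_succ, run_succ, ← ih, step_eq_of_agree hD hD' hag hY hτ]
      by_cases h2 : ∃ Y, NextBlock F D' (run F D' n) Y ∧ Y.time ≤ τ
      · obtain ⟨Y, hY, hτ⟩ := h2
        left
        rw [run_succ, run_succ, ih,
          step_eq_of_agree hD' hD (fun i hi => (hag i hi).symm) hY hτ]
      push Not at h1 h2
      exact Or.inr (key h1 h2 (by rw [ih]))
    · exact Or.inr (key h1 h2 h3)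

end Run

section Competitive

variable {F : ℕ → ℕ → Prop} {D : Finset Job} {h : List Block}

theorem fits_two_pow_mul (hdbl : ∀ k n, F k n → F (k + 1) (2 * n)) {k n : ℕ} (hk : F k n) (m : ℕ) :
    F (k + m) (2 ^ m * n) := by
  induction m with
  | zero => simpa using hk
  | succ m ih =>
    rw [pow_succ', mul_assoc]
    exact hdbl _ _ ih

/-- A full block has at most the cost per job of any fitting set of jobs of smaller or equal
level. -/
theorem two_pow_div_le_of_full (hmono : ∀ k n m, n ≤ m → F k m → F k n)
    (hdbl : ∀ k n, F k n → F (k + 1) (2 * n)) {k l n q : ℕ} (hkl : l ≤ k) (hq : 0 < q)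
    (hn : ¬ F k (n + 1)) (hl : F l q) : (2 : ℝ) ^ k / n ≤ 2 ^ l / q := by
  obtain ⟨m, rfl⟩ := Nat.exists_eq_add_of_le hkl
  have hle : 2 ^ m * q ≤ n := by
    by_contra hlt
    exact hn (hmono _ _ _ (by omega) (fits_two_pow_mul hdbl hl m))
  have hn0 : 0 < n := lt_of_lt_of_le (by positivity) hle
  have hle' : (2 : ℝ) ^ m * q ≤ n := by exact_mod_cast hle
  rw [div_le_div_iff₀ (by positivity) (by positivity), pow_add, mul_assoc]
  gcongr

theorem sum_two_pow_le (n : ℕ) : ∑ k ∈ Finset.range (n + 1), (2 : ℝ) ^ k ≤ 2 * 2 ^ n := by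
  rw [geom_sum_eq (by norm_num), pow_succ]
  linarith

/-- Every history costs at most `4` times any family of batches (indexed by `S`, with times `time`
and levels `lev`) to which the jobs are feasibly assigned by `σ`. -/
theorem Reach.cost_le {β : Type*} [DecidableEq β] (hmono : ∀ k n m, n ≤ m → F k m → F k n)
    (hdbl : ∀ k n, F k n → F (k + 1) (2 * n)) (hr : Reach F D h)
    (S : Finset β) (time : β → ℤ) (lev : β → ℕ) (σ : Job → β) (hσ : ∀ i ∈ D, σ i ∈ S)
    (hrel : ∀ i ∈ D, i.release ≤ time (σ i)) (hdead : ∀ i ∈ D, time (σ i) ≤ i.deadline)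
    (hfit : ∀ X ∈ S, F (lev X) (D.filter fun i => σ i = X).card) :
    (h.map fun Y => (2 : ℝ) ^ Y.level).sum ≤ 4 * ∑ X ∈ S, (2 : ℝ) ^ lev X := by
  set w : Job → ℝ := fun i => 2 ^ lev (σ i) / (D.filter fun i' => σ i' = σ i).card with hw
  obtain ⟨P, C, hP, hPt, hC, hCt, hcost⟩ : ∃ (P : Finset (Σ _ : β, ℕ)) (C : Finset Job),
      P ⊆ S.sigma (fun X => Finset.range (lev X + 1)) ∧
      (∀ p ∈ P, ∃ X ∈ h, X.level = p.2 ∧ time p.1 ≤ X.time) ∧ C ⊆ D ∧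
      (∀ i ∈ C, ∃ V ∈ h, i ∈ V.jobs ∧ ∃ X ∈ h, X.level = V.level + 1 ∧ i.release ≤ X.time) ∧
      (h.map fun Y => (2 : ℝ) ^ Y.level).sum ≤ ∑ p ∈ P, (2 : ℝ) ^ p.2 + ∑ i ∈ C, 2 * w i := by
    induction hr with
    | nil => exact ⟨∅, ∅, by simp⟩
    | @cons h Y hr hY ih =>
      obtain ⟨P, C, hP, hPt, hC, hCt, hcost⟩ := ih
      obtain ⟨θ, hθ, hj⟩ := hY.justified
      have hPt' : ∀ p ∈ P, ∃ X ∈ Y :: h, X.level = p.2 ∧ time p.1 ≤ X.time := fun p hp => by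
        obtain ⟨X, hX, hX'⟩ := hPt p hp
        exact ⟨X, List.mem_cons_of_mem _ hX, hX'⟩
      have hCt' : ∀ i ∈ C, ∃ V ∈ Y :: h, i ∈ V.jobs ∧
          ∃ X ∈ Y :: h, X.level = V.level + 1 ∧ i.release ≤ X.time := fun i hi => by
        obtain ⟨V, hV, hiV, X, hX, hX'⟩ := hCt i hi
        exact ⟨V, List.mem_cons_of_mem _ hV, hiV, X, List.mem_cons_of_mem _ hX, hX'⟩
      rw [List.map_cons, List.sum_cons]
      by_cases hA : ∃ X ∈ S, Y.level ≤ lev X ∧ θ < time X ∧ time X ≤ Y.time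
      · obtain ⟨X, hX, hlev, hlt, hle⟩ := hA
        have hnew : (⟨X, Y.level⟩ : Σ _ : β, ℕ) ∉ P := fun hmem => by
          obtain ⟨Z, hZ, hZl, hZt⟩ := hPt _ hmem
          have := hθ Z hZ hZl
          simp only at hZt
          omega
        refine ⟨insert ⟨X, Y.level⟩ P, C, ?_, ?_, hC, hCt', ?_⟩
        · refine Finset.insert_subset ?_ hP
          simpa using ⟨hX, by omega⟩
        · intro p hp
          rcases Finset.mem_insert.1 hp with rfl | hp
          · exact ⟨Y, List.mem_cons_self, rfl, hle⟩
          · exact hPt' p hp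
        · rw [Finset.sum_insert hnew]
          linarith
      · rcases hj with ⟨h0, j, hjY, hjr, hjd⟩ | ⟨V, hV, hVl, hfull, hVj⟩
        · have hjD := (mem_unserved.1 (hY.sub hjY)).1
          exact absurd ⟨σ j, hσ j hjD, by omega, hjr.trans_le (hrel j hjD),
            (hdead j hjD).trans hjd.le⟩ hA
        have hVD := hr.jobs_subset V hV
        have hdisj : Disjoint V.jobs C := Finset.disjoint_left.2 fun i hiV hiC => by
          obtain ⟨V', hV', hiV', X, hX, hXl, hXt⟩ := hCt i hiC
          obtain rfl := hr.eq_of_mem_jobs V hV V' hV' i hiV hiV'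
          have := hθ X hX (by omega)
          have := (hVj i hiV).1
          omega
        refine ⟨P, V.jobs ∪ C, hP, hPt', Finset.union_subset hVD hC, ?_, ?_⟩
        · intro i hi
          rcases Finset.mem_union.1 hi with hi | hi
          · obtain ⟨h', hV'⟩ := hr.exists_nextBlock_of_mem V hV
            exact ⟨V, List.mem_cons_of_mem _ hV, hi, Y, List.mem_cons_self, hVl.symm,
              (hV'.released i hi).trans (hr.time_le_time hY V hV)⟩
          · exact hCt' i hi
        · have hcard : 0 < V.jobs.card := by
            obtain ⟨h', hV'⟩ := hr.exists_nextBlock_of_mem V hV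
            obtain ⟨j, hj, -⟩ := hV'.trigger
            exact Finset.card_pos.2 ⟨j, hj⟩
          have hcard' : (V.jobs.card : ℝ) ≠ 0 := by positivity
          have hwi : ∀ i ∈ V.jobs, 2 * ((2 : ℝ) ^ V.level / V.jobs.card) ≤ 2 * w i := by
            intro i hi
            have hiD := hVD hi
            have hlev : lev (σ i) ≤ V.level := by
              by_contra hlt
              exact hA ⟨σ i, hσ i hiD, by omega, (hVj i hi).1.trans_le (hrel i hiD),
                (hdead i hiD).trans (hVj i hi).2⟩
            have hpos : 0 < (D.filter fun i' => σ i' = σ i).card :=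
              Finset.card_pos.2 ⟨i, Finset.mem_filter.2 ⟨hiD, rfl⟩⟩
            exact mul_le_mul_of_nonneg_left
              (two_pow_div_le_of_full hmono hdbl hlev hpos hfull (hfit _ (hσ i hiD))) zero_le_two
          have hsum := Finset.sum_le_sum hwi
          rw [Finset.sum_const, nsmul_eq_mul] at hsum
          have hYl : (2 : ℝ) ^ Y.level = V.jobs.card * (2 * (2 ^ V.level / V.jobs.card)) := by
            rw [← hVl, pow_succ]
            field_simp
          rw [Finset.sum_union hdisj]
          linarith
  have hPsum : ∑ p ∈ P, (2 : ℝ) ^ p.2 ≤ ∑ X ∈ S, 2 * (2 : ℝ) ^ lev X := by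
    refine (Finset.sum_le_sum_of_subset_of_nonneg hP fun _ _ _ => by positivity).trans ?_
    rw [Finset.sum_sigma]
    exact Finset.sum_le_sum fun X _ => sum_two_pow_le (lev X)
  have hCsum : ∑ i ∈ C, 2 * w i ≤ ∑ X ∈ S, 2 * (2 : ℝ) ^ lev X := by
    refine (Finset.sum_le_sum_of_subset_of_nonneg hC fun _ _ _ => by positivity).trans ?_
    rw [← Finset.sum_fiberwise_of_maps_to hσ]
    refine Finset.sum_le_sum fun X _ => ?_
    have hconst : ∀ i ∈ D.filter (fun i => σ i = X),
        2 * w i = 2 * (2 ^ lev X / (D.filter fun i => σ i = X).card) := by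
      intro i hi
      rw [hw, ← (Finset.mem_filter.1 hi).2]
    rw [Finset.sum_congr rfl hconst, Finset.sum_const, nsmul_eq_mul]
    rcases Nat.eq_zero_or_pos (D.filter fun i => σ i = X).card with h0 | hpos
    · rw [h0]
      simp
    · have : ((D.filter fun i => σ i = X).card : ℝ) ≠ 0 := by positivity
      apply le_of_eq
      field_simp
  rw [← Finset.mul_sum] at hPsum
  rw [← Finset.mul_sum (s := S)] at hCsum
  linarith

end Competitive

section Machines

variable (c : ℕ → ℝ) (B : ℕ → ℕ)

/-- `n` jobs can be executed at one time by machines of total cost at most `c 0 * 2 ^ k`. -/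
def Fits (k n : ℕ) : Prop :=
  ∃ l : List ℕ, (l.map c).sum ≤ c 0 * 2 ^ k ∧ n ≤ (l.map B).sum

theorem Fits.mono (k n m : ℕ) (hnm : n ≤ m) (hm : Fits c B k m) : Fits c B k n := by
  obtain ⟨l, hl, hl'⟩ := hm
  exact ⟨l, hl, hnm.trans hl'⟩

theorem Fits.double (k n : ℕ) (hn : Fits c B k n) : Fits c B (k + 1) (2 * n) := by
  obtain ⟨l, hl, hl'⟩ := hn
  refine ⟨l ++ l, ?_, ?_⟩
  · rw [List.map_append, List.sum_append, pow_succ]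
    linarith
  · rw [List.map_append, List.sum_append]
    omega

variable {c B}

theorem fits_one (hc1 : ∀ k, 1 ≤ c k) (hB1 : ∀ k, 1 ≤ B k) (k : ℕ) : Fits c B k 1 := by
  refine ⟨[0], ?_, by simpa using hB1 0⟩
  have := hc1 0
  have : (1 : ℝ) ≤ 2 ^ k := one_le_pow₀ (by norm_num)
  simp only [List.map_cons, List.map_nil, List.sum_cons, List.sum_nil, add_zero]
  nlinarith

/-- Every machine type costs at least half as much as a level into which its jobs fit. -/
theorem exists_level (hc1 : ∀ k, 1 ≤ c k) (hcmono : StrictMono c) (m : ℕ) :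
    ∃ k, Fits c B k (B m) ∧ c 0 * 2 ^ k ≤ 2 * c m := by
  classical
  have h0 := hc1 0
  have hex : ∃ k : ℕ, c m ≤ c 0 * 2 ^ k := by
    obtain ⟨k, hk⟩ := pow_unbounded_of_one_lt (c m) (by norm_num : (1 : ℝ) < 2)
    exact ⟨k, by nlinarith [pow_pos (by norm_num : (0 : ℝ) < 2) k]⟩
  refine ⟨Nat.find hex, ⟨[m], by simpa using Nat.find_spec hex, by simp⟩, ?_⟩
  have hmin := fun k => Nat.find_min hex (m := k)
  generalize Nat.find hex = k at hmin
  rcases k with _ | k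
  · have := hcmono.monotone (Nat.zero_le m)
    simp only [pow_zero]
    linarith
  · have := hmin k (by omega)
    rw [pow_succ]
    linarith

/-- A finite family of batches at time `t` that realizes the execution of the jobs `Q`. -/
structure Realizes (B : ℕ → ℕ) (t : ℤ) (Q : Finset ℕ) (S : Finset Batch) : Prop where
  time_eq : ∀ X ∈ S, X.time = t
  card_le : ∀ X ∈ S, X.bjobs.card ≤ B X.btype
  sub : ∀ X ∈ S, X.bjobs ⊆ Q
  disj : ∀ X ∈ S, ∀ Y ∈ S, X ≠ Y → Disjoint X.bjobs Y.bjobs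
  cover : ∀ j ∈ Q, ∃ X ∈ S, j ∈ X.bjobs

theorem exists_realizes (hc1 : ∀ k, 1 ≤ c k) (t : ℤ) (l : List ℕ) :
    ∀ Q : Finset ℕ, Q.card ≤ (l.map B).sum →
      ∃ S, Realizes B t Q S ∧ schedCost c S ≤ (l.map c).sum := by
  induction l with
  | nil =>
    intro Q hQ
    have : Q = ∅ := by simpa using hQ
    subst this
    exact ⟨∅, ⟨by simp, by simp, by simp, by simp, by simp⟩, by simp [schedCost]⟩
  | cons m l ih =>
    intro Q hQ
    rw [List.map_cons, List.sum_cons] at hQ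
    obtain ⟨R, hRQ, hR⟩ := Finset.exists_subset_card_eq (s := Q) (min_le_right (B m) Q.card)
    obtain ⟨S, hS, hcost⟩ := ih (Q \ R) (by rw [Finset.card_sdiff_of_subset hRQ]; omega)
    have hdR : ∀ X ∈ S, Disjoint R X.bjobs := fun X hX =>
      Finset.disjoint_sdiff.mono_right (hS.sub X hX)
    refine ⟨insert ⟨m, t, R⟩ S, ⟨?_, ?_, ?_, ?_, ?_⟩, ?_⟩
    · intro X hX
      rcases Finset.mem_insert.1 hX with rfl | hX
      · rfl
      · exact hS.time_eq X hX
    · intro X hX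
      rcases Finset.mem_insert.1 hX with rfl | hX
      · simp only
        omega
      · exact hS.card_le X hX
    · intro X hX
      rcases Finset.mem_insert.1 hX with rfl | hX
      · exact hRQ
      · exact (hS.sub X hX).trans Finset.sdiff_subset
    · intro X hX Y hY hne
      rcases Finset.mem_insert.1 hX with rfl | hX <;> rcases Finset.mem_insert.1 hY with rfl | hY
      · exact absurd rfl hne
      · exact hdR Y hY
      · exact (hdR X hX).symm
      · exact hS.disj X hX Y hY hne
    · intro j hj
      by_cases hjR : j ∈ R
      · exact ⟨_, Finset.mem_insert_self _ _, hjR⟩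
      · obtain ⟨X, hX, hjX⟩ := hS.cover j (Finset.mem_sdiff.2 ⟨hj, hjR⟩)
        exact ⟨X, Finset.mem_insert_of_mem hX, hjX⟩
    · rw [List.map_cons, List.sum_cons]
      have hpos := hc1 m
      by_cases hmem : (⟨m, t, R⟩ : Batch) ∈ S
      · rw [Finset.insert_eq_of_mem hmem]
        linarith
      · rw [schedCost, Finset.sum_insert hmem]
        simp only [schedCost] at hcost
        linarith

variable (c B)

/-- The batches that execute a block. -/
noncomputable def realize (Y : Block) : Finset Batch :=
  Classical.epsilon fun S => Realizes B Y.time (Y.jobs.image Job.name) S ∧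
    schedCost c S ≤ c 0 * 2 ^ Y.level

variable {c B}

theorem realize_spec (hc1 : ∀ k, 1 ≤ c k) {Y : Block} (hY : Fits c B Y.level Y.jobs.card) :
    Realizes B Y.time (Y.jobs.image Job.name) (realize c B Y) ∧
      schedCost c (realize c B Y) ≤ c 0 * 2 ^ Y.level := by
  obtain ⟨l, hl, hl'⟩ := hY
  obtain ⟨S, hS, hcost⟩ := exists_realizes hc1 Y.time l (Y.jobs.image Job.name)
    (Finset.card_image_le.trans hl')
  exact Classical.epsilon_spec (p := fun S => Realizes B Y.time (Y.jobs.image Job.name) S ∧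
    schedCost c S ≤ c 0 * 2 ^ Y.level) ⟨S, hS, hcost.trans hl⟩

end Machines

section Algorithm

/-- The job `j` of an instance with its data. -/
def SchedInstance.job (P : SchedInstance) (j : ℕ) : Job := ⟨j, P.r j, P.d j⟩

/-- The jobs of an instance with their data. -/
def SchedInstance.data (P : SchedInstance) : Finset Job := P.jobs.image P.job

theorem SchedInstance.mem_data {P : SchedInstance} {i : Job} :
    i ∈ P.data ↔ i.name ∈ P.jobs ∧ i = P.job i.name := by
  constructor
  · intro hi
    obtain ⟨j, hj, rfl⟩ := Finset.mem_image.1 hi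
    exact ⟨hj, rfl⟩
  · rintro ⟨hj, hi⟩
    exact hi ▸ Finset.mem_image_of_mem _ hj

theorem SchedInstance.release_le_deadline (P : SchedInstance) :
    ∀ i ∈ P.data, i.release ≤ i.deadline := by
  intro i hi
  obtain ⟨j, hj, rfl⟩ := Finset.mem_image.1 hi
  exact P.window j hj

variable (c : ℕ → ℝ) (B : ℕ → ℕ)

/-- All blocks executed for an instance. -/
noncomputable def blocks (P : SchedInstance) : List Block :=
  run (Fits c B) P.data P.data.card

/-- The online algorithm. -/
noncomputable def onlineAlg (P : SchedInstance) : Finset Batch :=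
  (blocks c B P).toFinset.biUnion (realize c B)

variable {c B}

theorem reach_blocks (P : SchedInstance) : Reach (Fits c B) P.data (blocks c B P) :=
  reach_run _ _ _

theorem realize_spec_of_mem_blocks (hc1 : ∀ k, 1 ≤ c k) {P : SchedInstance} {Y : Block}
    (hY : Y ∈ blocks c B P) :
    Realizes B Y.time (Y.jobs.image Job.name) (realize c B Y) ∧
      schedCost c (realize c B Y) ≤ c 0 * 2 ^ Y.level := by
  obtain ⟨h, hh⟩ := (reach_blocks P).exists_nextBlock_of_mem Y hY
  exact realize_spec hc1 hh.fits

theorem validSchedule_onlineAlg (hc1 : ∀ k, 1 ≤ c k) (hB1 : ∀ k, 1 ≤ B k) (P : SchedInstance) :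
    ValidSchedule B P (onlineAlg c B P) := by
  have hmem : ∀ X ∈ onlineAlg c B P, ∃ Y ∈ blocks c B P, X ∈ realize c B Y := by
    intro X hX
    simpa [onlineAlg] using hX
  refine ⟨fun X hX => ?_, fun X hX j hj => ?_, fun X hX X' hX' hne => ?_, fun j hj => ?_⟩
  · obtain ⟨Y, hY, hXY⟩ := hmem X hX
    exact (realize_spec_of_mem_blocks hc1 hY).1.card_le X hXY
  · obtain ⟨Y, hY, hXY⟩ := hmem X hX
    have hS := (realize_spec_of_mem_blocks hc1 hY).1
    obtain ⟨i, hi, rfl⟩ := Finset.mem_image.1 (hS.sub X hXY hj)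
    obtain ⟨h, hh⟩ := (reach_blocks P).exists_nextBlock_of_mem Y hY
    obtain ⟨hiP, hie⟩ := SchedInstance.mem_data.1 ((reach_blocks P).jobs_subset Y hY hi)
    have hr := hh.released i hi
    have hd := hh.urgent i (hh.sub hi)
    rw [hie] at hr hd
    rw [hS.time_eq X hXY]
    exact ⟨hiP, hr, hd⟩
  · obtain ⟨Y, hY, hXY⟩ := hmem X hX
    obtain ⟨Y', hY', hXY'⟩ := hmem X' hX'
    have hS := (realize_spec_of_mem_blocks hc1 hY).1
    have hS' := (realize_spec_of_mem_blocks hc1 hY').1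
    by_cases hYY : Y = Y'
    · subst hYY
      exact hS.disj X hXY X' hXY' hne
    · refine Finset.disjoint_left.2 fun j hj hj' => hYY ?_
      obtain ⟨i, hi, hij⟩ := Finset.mem_image.1 (hS.sub X hXY hj)
      obtain ⟨i', hi', hij'⟩ := Finset.mem_image.1 (hS'.sub X' hXY' hj')
      have he := (SchedInstance.mem_data.1 ((reach_blocks P).jobs_subset Y hY hi)).2
      have he' := (SchedInstance.mem_data.1 ((reach_blocks P).jobs_subset Y' hY' hi')).2
      have : i = i' := by rw [he, he', hij, hij']
      exact (reach_blocks P).eq_of_mem_jobs Y hY Y' hY' i hi (this ▸ hi')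
  · have hserved : P.job j ∉ unserved P.data (blocks c B P) := by
      rw [blocks, unserved_run_eq_empty (fits_one hc1 hB1) P.release_le_deadline le_rfl]
      exact Finset.notMem_empty _
    rw [mem_unserved] at hserved
    push Not at hserved
    obtain ⟨Y, hY, hjY⟩ := hserved (Finset.mem_image_of_mem _ hj)
    obtain ⟨X, hX, hjX⟩ := (realize_spec_of_mem_blocks hc1 hY).1.cover j
      (Finset.mem_image.2 ⟨_, hjY, rfl⟩)
    exact ⟨X, Finset.mem_biUnion.2 ⟨Y, List.mem_toFinset.2 hY, hX⟩, hjX⟩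

theorem causal_onlineAlg (hc1 : ∀ k, 1 ≤ c k) (hB1 : ∀ k, 1 ≤ B k) : Causal (onlineAlg c B) := by
  intro P P' τ hjobs hdata
  have hag : ∀ i : Job, i.release ≤ τ → (i ∈ P.data ↔ i ∈ P'.data) := by
    intro i hi
    have hj : i.name ∈ P.jobs ∧ P.r i.name ≤ τ ↔ i.name ∈ P'.jobs ∧ P'.r i.name ≤ τ := by
      rw [← Finset.mem_filter (p := fun j => P.r j ≤ τ), hjobs, Finset.mem_filter]
    have hd : i.name ∈ P.jobs ∧ P.r i.name ≤ τ → P.job i.name = P'.job i.name := by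
      intro h
      obtain ⟨h1, h2⟩ := hdata i.name (Finset.mem_filter.2 h)
      simp only [SchedInstance.job, h1, h2]
    rw [SchedInstance.mem_data, SchedInstance.mem_data]
    constructor
    · rintro ⟨hm, he⟩
      have h : i.name ∈ P.jobs ∧ P.r i.name ≤ τ := ⟨hm, by rw [he] at hi; exact hi⟩
      exact ⟨(hj.1 h).1, he.trans (hd h)⟩
    · rintro ⟨hm, he⟩
      have h := hj.2 ⟨hm, by rw [he] at hi; exact hi⟩
      exact ⟨h.1, he.trans (hd h).symm⟩
  have hblocks : ∀ Y : Block, Y.time ≤ τ → (Y ∈ blocks c B P ↔ Y ∈ blocks c B P') := by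
    intro Y hY
    have hF1 := fits_one hc1 hB1
    have := filter_run_eq_of_agree (F := Fits c B) P.release_le_deadline P'.release_le_deadline hag
      (max P.data.card P'.data.card)
    rw [run_eq_of_card_le hF1 P.release_le_deadline (le_max_left _ _),
      run_eq_of_card_le hF1 P'.release_le_deadline (le_max_right _ _)] at this
    have := congrArg (Y ∈ ·) this
    simpa [blocks, List.mem_filter, hY] using this
  have hsub : ∀ P P' : SchedInstance,
      (∀ Y : Block, Y.time ≤ τ → (Y ∈ blocks c B P ↔ Y ∈ blocks c B P')) →
      (onlineAlg c B P).filter (fun X => X.time ≤ τ) ⊆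
        (onlineAlg c B P').filter (fun X => X.time ≤ τ) := by
    intro P P' hPP X hX
    obtain ⟨hX, hXτ⟩ := Finset.mem_filter.1 hX
    obtain ⟨Y, hY, hXY⟩ := Finset.mem_biUnion.1 hX
    rw [List.mem_toFinset] at hY
    have ht := (realize_spec_of_mem_blocks hc1 hY).1.time_eq X hXY
    refine Finset.mem_filter.2 ⟨Finset.mem_biUnion.2 ⟨Y, ?_, hXY⟩, hXτ⟩
    exact List.mem_toFinset.2 ((hPP Y (ht ▸ hXτ)).1 hY)
  exact (hsub P P' hblocks).antisymm (hsub P' P fun Y hY => (hblocks Y hY).symm)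

theorem sum_biUnion_toFinset_le {α β : Type*} [DecidableEq α] [DecidableEq β] (f : β → ℝ)
    (hf : ∀ b, 0 ≤ f b) (g : α → Finset β) (l : List α) :
    ∑ b ∈ l.toFinset.biUnion g, f b ≤ (l.map fun a => ∑ b ∈ g a, f b).sum := by
  induction l with
  | nil => simp
  | cons a l ih =>
    rw [List.toFinset_cons, Finset.biUnion_insert, List.map_cons, List.sum_cons]
    have := Finset.sum_union_inter (s₁ := g a) (s₂ := l.toFinset.biUnion g) (f := f)
    have := Finset.sum_nonneg (s := g a ∩ l.toFinset.biUnion g) fun b _ => hf b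
    linarith

theorem schedCost_onlineAlg_le (hc1 : ∀ k, 1 ≤ c k) (P : SchedInstance) :
    schedCost c (onlineAlg c B P) ≤ c 0 * ((blocks c B P).map fun Y => (2 : ℝ) ^ Y.level).sum := by
  refine (sum_biUnion_toFinset_le _ (fun X : Batch => zero_le_one.trans (hc1 X.btype)) _ _).trans ?_
  rw [← List.sum_map_mul_left]
  exact List.sum_le_sum fun Y hY => (realize_spec_of_mem_blocks hc1 hY).2

theorem schedCost_onlineAlg_le_of_valid (hc1 : ∀ k, 1 ≤ c k) (hcmono : StrictMono c)
    {P : SchedInstance} {S : Finset Batch} (hS : ValidSchedule B P S) :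
    schedCost c (onlineAlg c B P) ≤ 8 * schedCost c S := by
  obtain ⟨hcap, hwin, -, hcov⟩ := hS
  choose lev hlev using fun m => exists_level (B := B) hc1 hcmono m
  have hex : ∀ i : Job, ∃ X : Batch, i ∈ P.data → X ∈ S ∧ i.name ∈ X.bjobs := by
    intro i
    by_cases hi : i ∈ P.data
    · obtain ⟨X, hX⟩ := hcov _ (SchedInstance.mem_data.1 hi).1
      exact ⟨X, fun _ => hX⟩
    · exact ⟨⟨0, 0, ∅⟩, fun h => absurd h hi⟩
  choose σ hσ using hex
  have hσwin : ∀ i ∈ P.data, i.release ≤ (σ i).time ∧ (σ i).time ≤ i.deadline := by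
    intro i hi
    have := (hwin _ (hσ i hi).1 _ (hσ i hi).2).2
    have he := (SchedInstance.mem_data.1 hi).2
    exact ⟨(congrArg Job.release he).trans_le this.1,
      this.2.trans_eq (congrArg Job.deadline he).symm⟩
  have hcost := (reach_blocks (c := c) (B := B) P).cost_le (Fits.mono c B) (Fits.double c B) S
    Batch.time (fun X => lev X.btype) σ (fun i hi => (hσ i hi).1) (fun i hi => (hσwin i hi).1)
    (fun i hi => (hσwin i hi).2) (fun X hX => by
      refine Fits.mono c B _ _ _ (le_trans ?_ (hcap X hX)) (hlev X.btype).1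
      refine Finset.card_le_card_of_injOn Job.name (fun i hi => ?_) (fun i hi i' hi' he => ?_)
      · obtain ⟨hiD, rfl⟩ := Finset.mem_filter.1 hi
        exact (hσ i hiD).2
      · rw [(SchedInstance.mem_data.1 (Finset.mem_filter.1 hi).1).2,
          (SchedInstance.mem_data.1 (Finset.mem_filter.1 hi').1).2, he])
  have hlevsum : c 0 * ∑ X ∈ S, (2 : ℝ) ^ lev X.btype ≤ 2 * schedCost c S := by
    rw [schedCost, Finset.mul_sum, Finset.mul_sum]
    exact Finset.sum_le_sum fun X _ => (hlev X.btype).2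
  have h0 : 0 ≤ c 0 := zero_le_one.trans (hc1 0)
  have := mul_le_mul_of_nonneg_left hcost h0
  have := schedCost_onlineAlg_le (B := B) hc1 P
  linarith

end Algorithm

/-- there is a deterministic (causal) online algorithm that on every
instance outputs a valid schedule of cost at most `8 · OPT`. -/
theorem eight_competitive_online_algorithm
    (c : ℕ → ℝ) (B : ℕ → ℕ)
    (hc1 : ∀ k, 1 ≤ c k) (hcmono : StrictMono c)
    (hB1 : ∀ k, 1 ≤ B k) (hBmono : StrictMono B) :
    ∃ A : SchedInstance → Finset Batch, Causal A ∧
      ∀ P : SchedInstance,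
        ValidSchedule B P (A P) ∧ schedCost c (A P) ≤ 8 * OPT c B P := by
  refine ⟨onlineAlg c B, causal_onlineAlg hc1 hB1, fun P => ?_⟩
  have hvalid := validSchedule_onlineAlg hc1 hB1 P
  refine ⟨hvalid, ?_⟩
  have hle : schedCost c (onlineAlg c B P) / 8 ≤ OPT c B P := by
    refine le_csInf ⟨_, _, hvalid, rfl⟩ ?_
    rintro x ⟨S, hS, rfl⟩
    have := schedCost_onlineAlg_le_of_valid hc1 hcmono hS
    linarith
  linarith
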